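/- Let f : ℝ^d → ℝ be a convex function of at most linear growth, p : ℝ^d → ℝ^d a subgradient selection, and Q(x) the matrix of Radon–Nikodym derivatives of the absolutely continuous parts of the second derivative measures of f. Then for every unit vector v ∈ ℝ^d, for Lebesgue-almost every x ∈ ℝ^d: lim_{r → 0} (1/r²) |f(x + rv) − f(x) − r⟨p(x), v⟩ − (r²/2)⟨Q(x) v, v⟩| = 0. -/

import Mathlib

open MeasureTheory Filter Metric
open scoped Topology ENNReal NNReal RealInnerProductSpace

/-- The second partial derivative `∂_i ∂_j φ` at `x`. -/
noncomputable def secondPartial (d : ℕ) (φ : EuclideanSpace ℝ (Fin d) → ℝ)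
    (i j : Fin d) (x : EuclideanSpace ℝ (Fin d)) : ℝ :=
  fderiv ℝ (fun z => fderiv ℝ φ z (EuclideanSpace.single j 1)) x (EuclideanSpace.single i 1)

/-- `μp, μn` represent the (signed) second derivative measures `μ_{ij} = μp i j - μn i j`
of the function `g`. -/
def IsSecondDerivMeasures (d : ℕ) (g : EuclideanSpace ℝ (Fin d) → ℝ)
    (μp μn : Fin d → Fin d → Measure (EuclideanSpace ℝ (Fin d))) : Prop :=
  (∀ i j, IsLocallyFiniteMeasure (μp i j)) ∧ (∀ i j, IsLocallyFiniteMeasure (μn i j)) ∧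
  ∀ i j, ∀ φ : EuclideanSpace ℝ (Fin d) → ℝ, ContDiff ℝ (⊤ : ℕ∞) φ → HasCompactSupport φ →
    (∫ x, φ x ∂(μp i j)) - (∫ x, φ x ∂(μn i j)) = ∫ x, g x * secondPartial d φ i j x

/-- The matrix of Radon–Nikodym derivatives of the absolutely continuous parts of the
second derivative measures. -/
noncomputable def densityMatrix (d : ℕ)
    (μp μn : Fin d → Fin d → Measure (EuclideanSpace ℝ (Fin d)))
    (x : EuclideanSpace ℝ (Fin d)) : Matrix (Fin d) (Fin d) ℝ :=
  Matrix.of fun i j =>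
    ((μp i j).rnDeriv volume x).toReal - ((μn i j).rnDeriv volume x).toReal

/-- The quadratic form `⟨M y, y⟩` of a matrix `M`. -/
noncomputable def quadForm (d : ℕ) (M : Matrix (Fin d) (Fin d) ℝ)
    (y : EuclideanSpace ℝ (Fin d)) : ℝ :=
  ∑ i, ∑ j, M i j * y i * y j


lemma measure_le_of_test {d : ℕ} (μ ν : Measure (EuclideanSpace ℝ (Fin d)))
    [IsLocallyFiniteMeasure ν]
    (h : ∀ φ : EuclideanSpace ℝ (Fin d) → ℝ, ContDiff ℝ (⊤ : ℕ∞) φ → HasCompactSupport φ →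
      (∀ x, 0 ≤ φ x) → ∫⁻ x, ENNReal.ofReal (φ x) ∂μ ≤ ∫⁻ x, ENNReal.ofReal (φ x) ∂ν) :
    μ ≤ ν := by
  have hK : ∀ K, IsCompact K → μ K ≤ ν K := by
    intro K hK
    rw [hK.measure_eq_iInf_isOpen (μ := ν)]
    refine le_iInf₂ fun U hKU => le_iInf fun hU => ?_
    obtain ⟨K', hK', hKK', hK'U⟩ := exists_compact_between hK hU hKU
    obtain ⟨φ, h0, h1, h01⟩ := exists_contMDiffMap_zero_one_of_isClosed (n := (⊤ : ℕ∞))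
      (modelWithCornersSelf ℝ (EuclideanSpace ℝ (Fin d))) (s := (interior K')ᶜ) (t := K)
      isOpen_interior.isClosed_compl hK.isClosed
      (Set.disjoint_left.2 fun x hx hx' => hx (hKK' hx'))
    have hφ0 : ∀ x, x ∉ K' → φ x = 0 := fun x hx => h0 (fun hx' => hx (interior_subset hx'))
    have hc : HasCompactSupport φ := HasCompactSupport.intro hK' hφ0
    have := h φ φ.contMDiff.contDiff hc (fun x => (h01 x).1)
    calc μ K = ∫⁻ x, K.indicator 1 x ∂μ := by rw [lintegral_indicator_one hK.measurableSet]
      _ ≤ ∫⁻ x, ENNReal.ofReal (φ x) ∂μ := by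
          refine lintegral_mono fun x => ?_
          by_cases hx : x ∈ K
          · simp [hx, h1 hx]
          · simp [hx]
      _ ≤ ∫⁻ x, ENNReal.ofReal (φ x) ∂ν := this
      _ ≤ ∫⁻ x, U.indicator 1 x ∂ν := by
          refine lintegral_mono fun x => ?_
          by_cases hx : x ∈ U
          · simp [hx, (h01 x).2]
          · simp [hx, hφ0 x (fun h => hx (hK'U h))]
      _ = ν U := by rw [lintegral_indicator_one hU.measurableSet]
  have hfin : IsLocallyFiniteMeasure μ := by
    refine ⟨fun x => ⟨closedBall x 1, closedBall_mem_nhds x one_pos, ?_⟩⟩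
    exact (hK _ (isCompact_closedBall x 1)).trans_lt (isCompact_closedBall x 1).measure_lt_top
  refine Measure.le_iff.2 fun s hs => ?_
  rw [hs.measure_eq_iSup_isCompact]
  exact iSup₂_le fun K hKs => iSup_le fun hKc => (hK K hKc).trans (measure_mono hKs)

lemma rn_le_of_le {X : Type*} [MeasurableSpace X] (lam α β : Measure X) [SigmaFinite lam]
    [SigmaFinite α] [SigmaFinite β] (h : X → ℝ≥0∞) (hm : Measurable h)
    (hle : lam.withDensity h + β ≤ α) :
    ∀ᵐ x ∂lam, h x + β.rnDeriv lam x ≤ α.rnDeriv lam x := by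
  obtain ⟨N, hN, hN0, hN1⟩ := α.mutuallySingular_singularPart lam
  refine ae_le_of_forall_setLIntegral_le_of_sigmaFinite (f := fun x => h x + β.rnDeriv lam x)
    (hm.add (Measure.measurable_rnDeriv _ _)) ?_
  intro s hs _
  have hae : (s ∩ N : Set X) =ᵐ[lam] s := by
    have : N =ᵐ[lam] Set.univ := by simpa [ae_eq_univ] using hN1
    simpa using (ae_eq_refl s).inter this
  have hsN := hs.inter hN
  calc ∫⁻ x in s, (h x + β.rnDeriv lam x) ∂lam
      = ∫⁻ x in s ∩ N, (h x + β.rnDeriv lam x) ∂lam := by rw [Measure.restrict_congr_set hae]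
    _ = lam.withDensity h (s ∩ N) + lam.withDensity (β.rnDeriv lam) (s ∩ N) := by
        rw [lintegral_add_left hm, withDensity_apply _ hsN, withDensity_apply _ hsN]
    _ ≤ lam.withDensity h (s ∩ N) + β (s ∩ N) := by
        gcongr; exact Measure.withDensity_rnDeriv_le _ _
    _ ≤ α (s ∩ N) := hle (s ∩ N)
    _ = (α.singularPart lam) (s ∩ N) + lam.withDensity (α.rnDeriv lam) (s ∩ N) := by
        conv_lhs => rw [← α.singularPart_add_rnDeriv lam]
        rfl
    _ = ∫⁻ x in s ∩ N, α.rnDeriv lam x ∂lam := by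
        rw [measure_mono_null Set.inter_subset_right hN0, zero_add, withDensity_apply _ hsN]
    _ = ∫⁻ x in s, α.rnDeriv lam x ∂lam := by rw [Measure.restrict_congr_set hae]

lemma add_withDensity_sub_le {X : Type*} [MeasurableSpace X] (lam α β : Measure X) [SigmaFinite lam]
    [SigmaFinite α] [SigmaFinite β] (hle : β ≤ α) :
    lam.withDensity (fun x => α.rnDeriv lam x - β.rnDeriv lam x) + β ≤ α := by
  have h1 : ∀ᵐ x ∂lam, β.rnDeriv lam x ≤ α.rnDeriv lam x := by
    have := rn_le_of_le lam α β 0 measurable_const (by simpa using hle)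
    simpa using this
  obtain ⟨N, hN, hN0, hN1⟩ := α.mutuallySingular_singularPart lam
  obtain ⟨N', hN', hN0', hN1'⟩ := β.mutuallySingular_singularPart lam
  have hs : β.singularPart lam ≤ α.singularPart lam := by
    refine Measure.le_iff.2 fun s hs => ?_
    set M := N'ᶜ
    have hM : MeasurableSet M := hN'.compl
    calc β.singularPart lam s ≤ β.singularPart lam (s ∩ M) + β.singularPart lam (s \ M) := by
          rw [measure_inter_add_sdiff _ hM]
      _ = β.singularPart lam (s ∩ M) := by
          have h0 : β.singularPart lam (s \ M) = 0 := by
            refine measure_mono_null (t := N') ?_ hN0'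
            intro x hx; simpa [M] using hx.2
          rw [h0, add_zero]
      _ ≤ β (s ∩ M) := Measure.singularPart_le _ _ _
      _ ≤ α (s ∩ M) := hle _
      _ = (α.singularPart lam) (s ∩ M) + lam.withDensity (α.rnDeriv lam) (s ∩ M) := by
        conv_lhs => rw [← α.singularPart_add_rnDeriv lam]
        rfl
      _ = (α.singularPart lam) (s ∩ M) := by
        rw [withDensity_absolutelyContinuous lam (α.rnDeriv lam)
          (measure_mono_null Set.inter_subset_right hN1'), add_zero]
      _ ≤ _ := measure_mono Set.inter_subset_left
  calc lam.withDensity (fun x => α.rnDeriv lam x - β.rnDeriv lam x) + β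
      = lam.withDensity (fun x => α.rnDeriv lam x - β.rnDeriv lam x) +
        (β.singularPart lam + lam.withDensity (β.rnDeriv lam)) := by
          rw [β.singularPart_add_rnDeriv lam]
    _ = β.singularPart lam + lam.withDensity
        ((fun x => α.rnDeriv lam x - β.rnDeriv lam x) + β.rnDeriv lam) := by
          rw [withDensity_add_right _ (Measure.measurable_rnDeriv _ _)]; abel
    _ = β.singularPart lam + lam.withDensity (α.rnDeriv lam) := by
          congr 1
          refine withDensity_congr_ae ?_
          filter_upwards [h1] with x hx
          exact tsub_add_cancel_of_le hx
    _ ≤ α.singularPart lam + lam.withDensity (α.rnDeriv lam) := by gcongr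
    _ = α := α.singularPart_add_rnDeriv lam

lemma alexandrov_one (g : ℝ → ℝ) (hg : ConvexOn ℝ Set.univ g) :
    ∀ᵐ t : ℝ, ∃ a c : ℝ, HasDerivAt g a t ∧
      Tendsto (fun r : ℝ => (g (t + r) - g t - r * a) / r ^ 2) (𝓝[≠] 0) (𝓝 c) := by
  set m : ℝ → ℝ := fun x ↦ derivWithin g (Set.Ioi x) x with hm
  have hmono : Monotone m := by
    have := hg.monotoneOn_rightDeriv
    rw [interior_univ, monotoneOn_univ] at this
    exact this
  have hd : ∀ x, HasDerivWithinAt g (m x) (Set.Ici x) x := fun x =>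
    (hg.hasDerivWithinAt_rightDeriv_of_mem_interior (by simp)).Ici_of_Ioi
  have hcont : Continuous g := hg.locallyLipschitz.continuous
  filter_upwards [hmono.ae_differentiableAt] with t ht
  set c := deriv m t
  have key : ∀ ε > 0, ∃ δ > 0, ∀ r, |r| < δ →
      |g (t + r) - g t - r * m t - c / 2 * r ^ 2| ≤ ε * r ^ 2 := by
    intro ε hε
    have h1 := (hasDerivAt_iff_isLittleO.1 ht.hasDerivAt).def hε
    obtain ⟨δ, hδ, hb⟩ := Metric.eventually_nhds_iff.1 h1
    refine ⟨δ, hδ, fun r hr => ?_⟩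
    set h : ℝ → ℝ := fun τ => g τ - (τ - t) * m t - c / 2 * (τ - t) ^ 2 with hh
    have hhc : Continuous h := by fun_prop
    have hhd : ∀ x, HasDerivWithinAt h (m x - m t - (x - t) * c) (Set.Ici x) x := by
      intro x
      have e1 : HasDerivAt (fun τ : ℝ => (τ - t) * m t) (m t) x := by
        simpa using ((hasDerivAt_id x).sub_const t).mul_const (m t)
      have e2 : HasDerivAt (fun τ : ℝ => c / 2 * (τ - t) ^ 2) ((x - t) * c) x := by
        have := (((hasDerivAt_id x).sub_const t).pow 2).const_mul (c / 2)
        refine (this.congr_deriv ?_)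
        simp; ring
      exact ((hd x).sub e1.hasDerivWithinAt).sub e2.hasDerivWithinAt
    have hbd : ∀ x, |x - t| ≤ |r| → ‖m x - m t - (x - t) * c‖ ≤ ε * |r| := by
      intro x hx
      have := hb (y := x) (by rw [Real.dist_eq]; linarith)
      simp only [smul_eq_mul, Real.norm_eq_abs] at this ⊢
      exact this.trans (by gcongr)
    have hfin : |h (t + r) - h t| ≤ ε * |r| * |r| := by
      rcases le_total 0 r with h0 | h0
      · have := norm_image_sub_le_of_norm_deriv_right_le_segment (f := h) (a := t) (b := t + r)
          (C := ε * |r|) hhc.continuousOn (fun x _ => hhd x) (fun x hx => hbd x (by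
            rw [abs_of_nonneg (by linarith [hx.1]), abs_of_nonneg h0]; linarith [hx.2]))
          (t + r) ⟨by linarith, le_rfl⟩
        rw [Real.norm_eq_abs] at this
        refine this.trans (le_of_eq ?_)
        rw [abs_of_nonneg h0]; ring
      · have := norm_image_sub_le_of_norm_deriv_right_le_segment (f := h) (a := t + r) (b := t)
          (C := ε * |r|) hhc.continuousOn (fun x _ => hhd x) (fun x hx => hbd x (by
            rw [abs_of_nonpos (by linarith [hx.2]), abs_of_nonpos h0]; linarith [hx.1]))
          t ⟨by linarith, le_rfl⟩
        rw [Real.norm_eq_abs] at this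
        rw [abs_sub_comm]
        refine this.trans (le_of_eq ?_)
        rw [abs_of_nonpos h0]; ring
    have e : g (t + r) - g t - r * m t - c / 2 * r ^ 2 = h (t + r) - h t := by
      simp only [hh]; ring
    rw [e]; refine hfin.trans (le_of_eq ?_)
    rw [mul_assoc, abs_mul_abs_self]; ring
  have hT : Tendsto (fun r : ℝ => (g (t + r) - g t - r * m t) / r ^ 2) (𝓝[≠] 0) (𝓝 (c / 2)) := by
    rw [Metric.tendsto_nhds]
    intro ε hε
    obtain ⟨δ, hδ, hk⟩ := key (ε / 2) (by linarith)
    have : ∀ᶠ r : ℝ in 𝓝[≠] 0, |r| < δ := by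
      refine nhdsWithin_le_nhds ?_
      exact Metric.eventually_nhds_iff.2 ⟨δ, hδ, fun y hy => by simpa [Real.dist_eq] using hy⟩
    filter_upwards [this, self_mem_nhdsWithin] with r hr hr0
    have hr2 : 0 < r ^ 2 := by have : r ≠ 0 := hr0; positivity
    rw [Real.dist_eq]
    have e : (g (t + r) - g t - r * m t) / r ^ 2 - c / 2 =
      (g (t + r) - g t - r * m t - c / 2 * r ^ 2) / r ^ 2 := by
        have : r ≠ 0 := hr0
        field_simp
    rw [e, abs_div, abs_of_pos hr2, div_lt_iff₀ hr2]
    refine (hk r hr).trans_lt ?_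
    nlinarith
  refine ⟨m t, c / 2, ?_, hT⟩
  rw [hasDerivAt_iff_tendsto_slope_zero]
  have h2 : Tendsto (fun r : ℝ => r * ((g (t + r) - g t - r * m t) / r ^ 2) + m t) (𝓝[≠] 0)
      (𝓝 (0 * (c / 2) + m t)) :=
    ((tendsto_id.mono_left nhdsWithin_le_nhds).mul hT).add_const _
  rw [zero_mul, zero_add] at h2
  refine h2.congr' ?_
  filter_upwards [self_mem_nhdsWithin] with r hr0
  have : r ≠ 0 := hr0
  simp only [smul_eq_mul]
  field_simp; ring

lemma ae_of_ae_line {d : ℕ} (v : EuclideanSpace ℝ (Fin d)) {s : Set (EuclideanSpace ℝ (Fin d))}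
    (hs : MeasurableSet s) (h : ∀ y, ∀ᵐ t : ℝ, y + t • v ∈ s) :
    ∀ᵐ y ∂(volume : Measure (EuclideanSpace ℝ (Fin d))), y ∈ s :=
  ae_mem_of_ae_add_linearMap_mem (LinearMap.toSpanSingleton ℝ _ v) volume volume hs
    (by simpa [LinearMap.toSpanSingleton_apply] using h)

lemma tendsto_of_rat (u : ℝ → ℝ) (hu : ContinuousOn u {0}ᶜ) (c : ℝ)
    (h : Tendsto (fun q : ℚ => u q) (comap (fun q : ℚ => (q : ℝ)) (𝓝[≠] 0)) (𝓝 c)) :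
    Tendsto u (𝓝[≠] 0) (𝓝 c) := by
  rw [Metric.tendsto_nhds] at h ⊢
  intro ε hε
  have h1 := h (ε / 2) (by linarith)
  rw [eventually_comap] at h1
  rw [eventually_nhdsWithin_iff, Metric.eventually_nhds_iff] at h1 ⊢
  obtain ⟨δ, hδ, hb⟩ := h1
  refine ⟨δ, hδ, fun r hr hr0 => ?_⟩
  by_contra hcon
  rw [not_lt] at hcon
  have hopen : ∀ᶠ s in 𝓝 r, ε / 2 < dist (u s) c ∧ dist s 0 < δ ∧ s ∈ ({0} : Set ℝ)ᶜ := by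
    have hc : ContinuousAt u r := hu.continuousAt (isOpen_compl_singleton.mem_nhds hr0)
    refine ((hc.dist continuousAt_const).eventually (lt_mem_nhds (by linarith))).and
      (((continuousAt_id.dist continuousAt_const).eventually (gt_mem_nhds hr)).and
      (isOpen_compl_singleton.mem_nhds hr0))
  obtain ⟨s, ⟨hs1, hs2, hs3⟩, ⟨q, rfl⟩⟩ := (Rat.denseRange_cast (𝕜 := ℝ)).exists_mem_open
    isOpen_interior ⟨r, mem_interior_iff_mem_nhds.2 hopen⟩ |> fun ⟨q, hq⟩ =>
      (⟨(q : ℝ), interior_subset hq, q, rfl⟩ : ∃ s : ℝ, s ∈ {s | ε / 2 < dist (u s) c ∧ dist s 0 < δ ∧ s ∈ ({0} : Set ℝ)ᶜ} ∧ ∃ q : ℚ, (q : ℝ) = s)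
  exact absurd (hb hs2 hs3 q rfl) (not_lt.2 hs1.le)

lemma ae_second_order {d : ℕ} (f : EuclideanSpace ℝ (Fin d) → ℝ) (hf : ConvexOn ℝ Set.univ f)
    (v : EuclideanSpace ℝ (Fin d)) :
    ∀ᵐ x ∂(volume : Measure (EuclideanSpace ℝ (Fin d))),
      LineDifferentiableAt ℝ f x v ∧ ∃ c : ℝ,
        Tendsto (fun r : ℝ => (f (x + r • v) - f x - r * lineDeriv ℝ f x v) / r ^ 2)
          (𝓝[≠] 0) (𝓝 c) := by
  have hcont : Continuous f := hf.locallyLipschitz.continuous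
  have hmeas : MeasurableSet ({x | LineDifferentiableAt ℝ f x v} ∩
      {x | ∃ c : ℝ, Tendsto (fun q : ℚ => (f (x + (q : ℝ) • v) - f x - q * lineDeriv ℝ f x v)
        / (q : ℝ) ^ 2) (comap (fun q : ℚ => (q : ℝ)) (𝓝[≠] 0)) (𝓝 c)}) := by
    refine (measurableSet_lineDifferentiableAt hcont).inter ?_
    refine StronglyMeasurable.measurableSet_exists_tendsto (f := fun (q : ℚ) x =>
      (f (x + (q : ℝ) • v) - f x - q * lineDeriv ℝ f x v) / (q : ℝ) ^ 2) fun q => ?_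
    refine Measurable.stronglyMeasurable ?_
    have h1 := measurable_lineDeriv (𝕜 := ℝ) (v := v) hcont
    have h2 : Measurable fun x => f (x + (q : ℝ) • v) := by
      apply Continuous.measurable; fun_prop
    exact ((h2.sub hcont.measurable).sub (h1.const_mul _)).div_const _
  have hae := ae_of_ae_line v hmeas ?_
  · filter_upwards [hae] with x hx
    refine ⟨hx.1, ?_⟩
    obtain ⟨c, hc⟩ := hx.2
    refine ⟨c, tendsto_of_rat (fun r : ℝ => (f (x + r • v) - f x - r * lineDeriv ℝ f x v) / r ^ 2)
      ?_ c hc⟩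
    refine ContinuousOn.div (by fun_prop) (by fun_prop) ?_
    intro r hr
    exact pow_ne_zero _ hr
  · intro y
    have hg : ConvexOn ℝ Set.univ (fun t : ℝ => f (y + t • v)) := by
      refine ⟨convex_univ, fun a _ b _ s t hs ht hst => ?_⟩
      have := hf.2 (Set.mem_univ (y + a • v)) (Set.mem_univ (y + b • v)) hs ht hst
      refine le_trans (le_of_eq ?_) this
      have e : s • (y + a • v) + t • (y + b • v) = (s + t) • y + (s * a + t * b) • v := by module
      rw [e, hst, one_smul]
      simp only [smul_eq_mul]
    filter_upwards [alexandrov_one _ hg] with t ht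
    obtain ⟨a, c, ha, hc⟩ := ht
    have hl : HasLineDerivAt ℝ f a (y + t • v) v := by
      unfold HasLineDerivAt
      have h1 : HasDerivAt (fun s : ℝ => f (y + (t + s) • v)) a 0 := by
        have : HasDerivAt (fun t : ℝ => f (y + t • v)) a (t + 0) := by simpa using ha
        exact this.comp_const_add t 0
      refine h1.congr_of_eventuallyEq (Eventually.of_forall fun s => ?_)
      simp only [add_smul, add_assoc]
    refine ⟨hl.lineDifferentiableAt, c, ?_⟩
    have e := hl.lineDeriv
    have hc' := hc.comp (tendsto_comap (f := fun q : ℚ => (q : ℝ)))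
    refine hc'.congr fun q => ?_
    simp only [Function.comp, e, add_smul, add_assoc]

noncomputable def tent (s : ℝ) : ℝ := max 0 (1 - |s|)

lemma tent_nonneg (s : ℝ) : 0 ≤ tent s := le_max_left _ _

lemma tent_le_one (s : ℝ) : tent s ≤ 1 := max_le zero_le_one (by linarith [abs_nonneg s])

lemma continuous_tent : Continuous tent := by unfold tent; fun_prop

lemma tent_eq_zero {s : ℝ} (h : s ∉ Set.Icc (-1 : ℝ) 1) : tent s = 0 := by
  refine max_eq_left ?_
  have : ¬ |s| ≤ 1 := fun h' => h (abs_le.1 h')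
  linarith

lemma hasCompactSupport_tent : HasCompactSupport tent :=
  HasCompactSupport.intro (isCompact_Icc (a := (-1 : ℝ)) (b := 1)) fun _ h => tent_eq_zero h

lemma integral_tent_mul (w : ℝ → ℝ) :
    ∫ s, tent s * w s = ∫ s in (-1 : ℝ)..1, tent s * w s := by
  rw [intervalIntegral.integral_of_le (by norm_num), ← integral_Icc_eq_integral_Ioc,
    setIntegral_eq_integral_of_forall_compl_eq_zero]
  intro s hs
  rw [tent_eq_zero hs, zero_mul]

lemma tent_taylor (u u' u'' : ℝ → ℝ) (h1 : ∀ t, HasDerivAt u (u' t) t)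
    (h2 : ∀ t, HasDerivAt u' (u'' t) t) (hc : Continuous u'') (r : ℝ) (hr : r ≠ 0) :
    ∫ s, tent s * u'' (r * s) = (u r + u (-r) - 2 * u 0) / r ^ 2 := by
  have hct : Continuous (fun s => tent s * u'' (r * s)) := continuous_tent.mul (by fun_prop)
  rw [integral_tent_mul, ← intervalIntegral.integral_add_adjacent_intervals (b := 0)
    (hct.intervalIntegrable _ _) (hct.intervalIntegrable _ _)]
  have hu : ∀ s, HasDerivAt (fun s => u (r * s)) (u' (r * s) * r) s := fun s =>
    (h1 (r * s)).comp s (by simpa using (hasDerivAt_id s).const_mul r)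
  have hu' : ∀ s, HasDerivAt (fun s => u' (r * s)) (u'' (r * s) * r) s := fun s =>
    (h2 (r * s)).comp s (by simpa using (hasDerivAt_id s).const_mul r)
  have e1 : ∫ s in (0:ℝ)..1, tent s * u'' (r * s) = u r / r ^ 2 - u' 0 / r - u 0 / r ^ 2 := by
    have : ∫ s in (0:ℝ)..1, tent s * u'' (r * s) = ∫ s in (0:ℝ)..1, (1 - s) * u'' (r * s) := by
      refine intervalIntegral.integral_congr fun s hs => ?_
      rw [Set.uIcc_of_le zero_le_one] at hs
      simp only [tent, abs_of_nonneg hs.1]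
      rw [max_eq_right (by linarith [hs.2])]
    rw [this, intervalIntegral.integral_eq_sub_of_hasDerivAt
      (f := fun s => (1 - s) * (u' (r * s) / r) + u (r * s) / r ^ 2)]
    · simp; ring
    · intro s _
      have := (((hasDerivAt_id s).const_sub 1).mul ((hu' s).div_const r)).add
        ((hu s).div_const (r ^ 2))
      refine this.congr_deriv ?_
      simp only [id]
      field_simp
      ring
    · exact Continuous.intervalIntegrable (by fun_prop) _ _
  have e2 : ∫ s in (-1:ℝ)..0, tent s * u'' (r * s) =
      u (-r) / r ^ 2 + u' 0 / r - u 0 / r ^ 2 := by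
    have : ∫ s in (-1:ℝ)..0, tent s * u'' (r * s) = ∫ s in (-1:ℝ)..0, (1 + s) * u'' (r * s) := by
      refine intervalIntegral.integral_congr fun s hs => ?_
      rw [Set.uIcc_of_le (by norm_num)] at hs
      simp only [tent, abs_of_nonpos hs.2]
      rw [max_eq_right (by linarith [hs.1])]; ring
    rw [this, intervalIntegral.integral_eq_sub_of_hasDerivAt
      (f := fun s => (1 + s) * (u' (r * s) / r) - u (r * s) / r ^ 2)]
    · simp; ring
    · intro s _
      have := (((hasDerivAt_id s).const_add 1).mul ((hu' s).div_const r)).sub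
        ((hu s).div_const (r ^ 2))
      refine this.congr_deriv ?_
      simp only [id]
      field_simp
      ring
    · exact Continuous.intervalIntegrable (by fun_prop) _ _
  rw [e1, e2]; ring

lemma integral_tent : ∫ s, tent s = 1 := by
  have := tent_taylor (fun t => t ^ 2 / 2) (fun t => t) (fun _ => 1)
    (fun t => by
      have := (hasDerivAt_pow 2 t).div_const 2
      refine this.congr_deriv ?_
      simp) (fun t => hasDerivAt_id t) continuous_const 1 one_ne_zero
  norm_num at this
  exact this

lemma tent_lebesgue (h : ℝ → ℝ) (hm : Measurable h) (N : ℝ) (hb : ∀ t, |h t| ≤ N)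
    (r : ℕ → ℝ) (hr : Tendsto r atTop (𝓝[>] 0)) :
    ∀ᵐ t : ℝ, Tendsto (fun n => ∫ s, tent s * h (t - r n * s)) atTop (𝓝 (h t)) := by
  have hli : LocallyIntegrable h := by
    refine (locallyIntegrable_const N).mono hm.aestronglyMeasurable ?_
    refine Eventually.of_forall fun t => ?_
    rw [Real.norm_eq_abs, Real.norm_eq_abs]
    exact (hb t).trans (le_abs_self N)
  filter_upwards [IsUnifLocDoublingMeasure.ae_tendsto_average_norm_sub volume hli 1] with t ht
  have h1 := ht (fun _ : ℕ => t) r hr (by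
    filter_upwards [hr.eventually self_mem_nhdsWithin] with n hn
    exact mem_closedBall_self (by have : 0 < r n := hn; linarith))
  have hint : ∀ n, Integrable (fun s => tent s * h (t - r n * s)) := by
    intro n
    refine (continuous_tent.integrable_of_hasCompactSupport hasCompactSupport_tent).mul_bdd
      (c := N) ?_ ?_
    · exact (hm.comp (by fun_prop)).aestronglyMeasurable
    · exact Eventually.of_forall fun s => hb _
  have hint2 : Integrable (fun s => tent s * h t) :=
    (continuous_tent.integrable_of_hasCompactSupport hasCompactSupport_tent).mul_const _
  rw [tendsto_iff_norm_sub_tendsto_zero]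
  have h2 := h1.const_mul 2
  rw [mul_zero] at h2
  refine squeeze_zero' (Eventually.of_forall fun _ => norm_nonneg _) ?_ h2
  filter_upwards [hr.eventually self_mem_nhdsWithin] with n hn
  have hn : 0 < r n := hn
  have e1 : (∫ s, tent s * h (t - r n * s)) - h t =
      ∫ s in (-1 : ℝ)..1, tent s * (h (t - r n * s) - h t) := by
    rw [← integral_tent_mul]
    simp only [mul_sub]
    rw [integral_sub (hint n) hint2, integral_mul_const, integral_tent, one_mul]
  have hnn : IntervalIntegrable (fun s => |h (t - r n * s) - h t|) volume (-1) 1 := by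
    refine (intervalIntegrable_const (c := N + N)).mono_fun' ?_ ?_
    · have hmm : Measurable (fun s => |h (t - r n * s) - h t|) :=
        ((hm.comp (by fun_prop : Measurable fun s : ℝ => t - r n * s)).sub_const _).abs
      exact hmm.aestronglyMeasurable
    · refine Eventually.of_forall fun s => ?_
      simp only [Real.norm_eq_abs, abs_abs]
      exact (abs_sub _ _).trans (add_le_add (hb _) (hb _))
  rw [e1]
  calc ‖∫ s in (-1 : ℝ)..1, tent s * (h (t - r n * s) - h t)‖
      ≤ ∫ s in (-1 : ℝ)..1, |h (t - r n * s) - h t| := by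
        refine intervalIntegral.norm_integral_le_of_norm_le (by norm_num) ?_ hnn
        refine Eventually.of_forall fun s _ => ?_
        rw [Real.norm_eq_abs, abs_mul, abs_of_nonneg (tent_nonneg s)]
        exact mul_le_of_le_one_left (abs_nonneg _) (tent_le_one s)
    _ = (r n)⁻¹ * ∫ s in (t - r n)..(t + r n), |h s - h t| := by
        rw [intervalIntegral.integral_comp_sub_mul (fun s => |h s - h t|) hn.ne' t]
        simp
    _ = 2 * ⨍ y in closedBall t (r n), ‖h y - h t‖ := by
        rw [setAverage_eq, Real.closedBall_eq_Icc, measureReal_def, Real.volume_Icc,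
          intervalIntegral.integral_of_le (by linarith), integral_Icc_eq_integral_Ioc,
          ENNReal.toReal_ofReal (by linarith)]
        simp only [Real.norm_eq_abs, smul_eq_mul]
        rw [← mul_assoc]; congr 1
        have : t + r n - (t - r n) = 2 * r n := by ring
        rw [this]; field_simp

noncomputable def dirSecond (d : ℕ) (φ : EuclideanSpace ℝ (Fin d) → ℝ)
    (v x : EuclideanSpace ℝ (Fin d)) : ℝ :=
  ∑ i, ∑ j, v i * v j * secondPartial d φ i j x

lemma eucl_sum {d : ℕ} (v : EuclideanSpace ℝ (Fin d)) :
    v = ∑ i, v i • EuclideanSpace.single i (1 : ℝ) := by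
  have := (EuclideanSpace.basisFun (Fin d) ℝ).sum_repr v
  simpa using this.symm

lemma clm_sum {d : ℕ} (L : EuclideanSpace ℝ (Fin d) →L[ℝ] ℝ) (v : EuclideanSpace ℝ (Fin d)) :
    L v = ∑ i, v i * L (EuclideanSpace.single i (1 : ℝ)) := by
  conv_lhs => rw [eucl_sum v]
  simp [map_sum]

lemma contDiff_fderiv_apply {d : ℕ} {φ : EuclideanSpace ℝ (Fin d) → ℝ}
    (hφ : ContDiff ℝ (⊤ : ℕ∞) φ) (w : EuclideanSpace ℝ (Fin d)) :
    ContDiff ℝ (⊤ : ℕ∞) (fun z => fderiv ℝ φ z w) :=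
  (hφ.fderiv_right (m := (⊤ : ℕ∞)) (by simp)).clm_apply contDiff_const

lemma dirSecond_eq {d : ℕ} {φ : EuclideanSpace ℝ (Fin d) → ℝ}
    (hφ : ContDiff ℝ (⊤ : ℕ∞) φ) (v x : EuclideanSpace ℝ (Fin d)) :
    dirSecond d φ v x = fderiv ℝ (fun z => fderiv ℝ φ z v) x v := by
  have hd : ∀ w, Differentiable ℝ (fun z => fderiv ℝ φ z w) := fun w =>
    (contDiff_fderiv_apply hφ w).differentiable (by simp)
  have e : (fun z => fderiv ℝ φ z v) =
      fun z => ∑ j, v j * fderiv ℝ φ z (EuclideanSpace.single j (1 : ℝ)) := by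
    funext z; exact clm_sum _ _
  rw [e, fderiv_fun_sum (fun j _ => ((hd _).const_mul _).differentiableAt), clm_sum]
  unfold dirSecond secondPartial
  refine Finset.sum_congr rfl fun i _ => ?_
  rw [sum_apply, Finset.mul_sum]
  refine Finset.sum_congr rfl fun j _ => ?_
  rw [fderiv_const_mul (hd _).differentiableAt]
  simp [mul_assoc]

lemma continuous_dirSecond {d : ℕ} {φ : EuclideanSpace ℝ (Fin d) → ℝ}
    (hφ : ContDiff ℝ (⊤ : ℕ∞) φ) (v : EuclideanSpace ℝ (Fin d)) :
    Continuous (dirSecond d φ v) := by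
  have : dirSecond d φ v = fun x => fderiv ℝ (fun z => fderiv ℝ φ z v) x v := by
    funext x; exact dirSecond_eq hφ v x
  rw [this]
  exact (contDiff_fderiv_apply (contDiff_fderiv_apply hφ v) v).continuous

lemma hasCompactSupport_dirSecond {d : ℕ} {φ : EuclideanSpace ℝ (Fin d) → ℝ}
    (hφ : ContDiff ℝ (⊤ : ℕ∞) φ) (hc : HasCompactSupport φ) (v : EuclideanSpace ℝ (Fin d)) :
    HasCompactSupport (dirSecond d φ v) := by
  have : dirSecond d φ v = fun x => fderiv ℝ (fun z => fderiv ℝ φ z v) x v := by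
    funext x; exact dirSecond_eq hφ v x
  rw [this]
  exact (hc.fderiv_apply (𝕜 := ℝ) v).fderiv_apply (𝕜 := ℝ) v

lemma dirSecond_translate {d : ℕ} {φ : EuclideanSpace ℝ (Fin d) → ℝ}
    (v w x : EuclideanSpace ℝ (Fin d)) :
    dirSecond d (fun z => φ (z + w)) v x = dirSecond d φ v (x + w) := by
  unfold dirSecond secondPartial
  simp only [fderiv_comp_add_right]
  refine Finset.sum_congr rfl fun i _ => Finset.sum_congr rfl fun j _ => ?_
  rw [fderiv_comp_add_right w (f := fun z => fderiv ℝ φ z (EuclideanSpace.single j 1))]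

lemma tent_dirSecond {d : ℕ} {φ : EuclideanSpace ℝ (Fin d) → ℝ}
    (hφ : ContDiff ℝ (⊤ : ℕ∞) φ) (v x : EuclideanSpace ℝ (Fin d)) (r : ℝ) (hr : r ≠ 0) :
    ∫ s, tent s * dirSecond d φ v (x + (r * s) • v) =
      (φ (x + r • v) + φ (x - r • v) - 2 * φ x) / r ^ 2 := by
  have hl : ∀ t : ℝ, HasDerivAt (fun t : ℝ => x + t • v) v t := fun t => by
    simpa using ((hasDerivAt_id t).smul_const v).const_add x
  have h1 : ∀ t : ℝ, HasDerivAt (fun t : ℝ => φ (x + t • v)) (fderiv ℝ φ (x + t • v) v) t :=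
    fun t => ((hφ.differentiable (by simp)).differentiableAt.hasFDerivAt).comp_hasDerivAt t (hl t)
  have h2 : ∀ t : ℝ, HasDerivAt (fun t : ℝ => fderiv ℝ φ (x + t • v) v)
      (dirSecond d φ v (x + t • v)) t := fun t => by
    rw [dirSecond_eq hφ]
    exact (((contDiff_fderiv_apply hφ v).differentiable
      (by simp)).differentiableAt.hasFDerivAt).comp_hasDerivAt (f := fun t : ℝ => x + t • v) t (hl t)
  have := tent_taylor _ _ (fun t : ℝ => dirSecond d φ v (x + t • v)) h1 h2
    ((continuous_dirSecond hφ v).comp (by fun_prop)) r hr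
  rw [this]
  simp [sub_eq_add_neg]

noncomputable def Gfun (d : ℕ) (f φ : EuclideanSpace ℝ (Fin d) → ℝ)
    (v : EuclideanSpace ℝ (Fin d)) (τ : ℝ) : ℝ :=
  ∫ x, f x * dirSecond d φ v (x + τ • v)

lemma continuous_Gfun {d : ℕ} {f φ : EuclideanSpace ℝ (Fin d) → ℝ} (hf : Continuous f)
    (hφ : ContDiff ℝ (⊤ : ℕ∞) φ) (hc : HasCompactSupport φ) (v : EuclideanSpace ℝ (Fin d)) :
    Continuous (Gfun d f φ v) := by
  have e : Gfun d f φ v = fun τ => ∫ x, f (x - τ • v) * dirSecond d φ v x := by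
    funext τ
    unfold Gfun
    rw [← integral_add_right_eq_self (fun x => f (x - τ • v) * dirSecond d φ v x) (τ • v)]
    simp
  rw [e, ← continuousOn_univ]
  have := continuous_dirSecond hφ v
  refine continuousOn_integral_of_compact_support (hasCompactSupport_dirSecond hφ hc v) ?_ ?_
  · exact Continuous.continuousOn (by simp only [Function.uncurry_def]; fun_prop)
  · intro τ x _ hx
    rw [image_eq_zero_of_notMem_tsupport hx, mul_zero]

noncomputable def Dlt {d : ℕ} (f : EuclideanSpace ℝ (Fin d) → ℝ)
    (v : EuclideanSpace ℝ (Fin d)) (r : ℝ) (x : EuclideanSpace ℝ (Fin d)) : ℝ :=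
  (f (x + r • v) + f (x - r • v) - 2 * f x) / r ^ 2

lemma integral_Dlt {d : ℕ} {f φ : EuclideanSpace ℝ (Fin d) → ℝ} (hf : Continuous f)
    (hφ : ContDiff ℝ (⊤ : ℕ∞) φ) (hc : HasCompactSupport φ) (v : EuclideanSpace ℝ (Fin d))
    (r : ℝ) (hr : r ≠ 0) :
    ∫ x, φ x * Dlt f v r x = ∫ s, tent s * Gfun d f φ v (r * s) := by
  have hφc := hφ.continuous
  have i1 : ∀ w, Integrable (fun x => φ x * f (x + w)) := fun w =>
    (hφc.mul (by fun_prop)).integrable_of_hasCompactSupport hc.mul_right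
  have i2 : ∀ w, Integrable (fun x => φ (x + w) * f x) := fun w => by
    have := (i1 (-w)).comp_add_right w
    simpa using this
  have tr : ∀ w, ∫ x, φ x * f (x + w) = ∫ x, φ (x - w) * f x := fun w => by
    rw [← integral_add_right_eq_self (fun x => φ (x - w) * f x) w]
    simp
  have e1 : ∫ x, φ x * Dlt f v r x = ∫ x, f x * Dlt φ v r x := by
    have a1 : ∀ x, φ x * Dlt f v r x =
        (φ x * f (x + r • v) + φ x * f (x + -(r • v)) - 2 * (φ x * f (x + 0))) / r ^ 2 := by
      intro x; simp only [Dlt, sub_eq_add_neg, add_zero]; ring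
    have a2 : ∀ x, f x * Dlt φ v r x =
        (φ (x + r • v) * f x + φ (x + -(r • v)) * f x - 2 * (φ (x + 0) * f x)) / r ^ 2 := by
      intro x; simp only [Dlt, sub_eq_add_neg, add_zero]; ring
    simp only [a1, a2]
    have lin : ∀ a b c : EuclideanSpace ℝ (Fin d) → ℝ, Integrable a → Integrable b →
        Integrable c → ∫ x, (a x + b x - 2 * c x) / r ^ 2 =
          ((∫ x, a x) + (∫ x, b x) - 2 * ∫ x, c x) / r ^ 2 := by
      intro a b c ha hb hc
      have hab : Integrable (fun x => a x + b x) := ha.add hb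
      rw [integral_div, integral_sub hab (hc.const_mul 2), integral_add ha hb, integral_const_mul]
    rw [lin _ _ _ (i1 _) (i1 _) (i1 _), lin _ _ _ (i2 _) (i2 _) (i2 _), tr, tr, tr]
    simp only [sub_eq_add_neg, neg_neg, neg_zero]
    ring
  have hψ := continuous_dirSecond hφ v
  have hψc := hasCompactSupport_dirSecond hφ hc v
  have htc := continuous_tent
  rw [e1]
  have e2 : ∀ x, f x * Dlt φ v r x =
      ∫ s, f x * (tent s * dirSecond d φ v (x + (r * s) • v)) := by
    intro x
    rw [integral_const_mul, tent_dirSecond hφ v x r hr, Dlt]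
  simp only [e2]
  rw [integral_integral_swap_of_hasCompactSupport
    (f := fun x s => f x * (tent s * dirSecond d φ v (x + (r * s) • v)))]
  · refine integral_congr_ae (Eventually.of_forall fun s => ?_)
    simp only [Gfun]
    rw [← integral_const_mul]
    congr 1; funext x; ring
  · simp only [Function.uncurry_def]; fun_prop
  · have hK : IsCompact ((fun p : EuclideanSpace ℝ (Fin d) × ℝ => p.1 - (r * p.2) • v) ''
        (tsupport (dirSecond d φ v) ×ˢ Set.Icc (-1 : ℝ) 1)) :=
      (IsCompact.prod hψc isCompact_Icc).image (by fun_prop)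
    refine HasCompactSupport.intro (hK.prod (isCompact_Icc (a := (-1 : ℝ)) (b := 1))) ?_
    rintro ⟨x, s⟩ hx
    simp only [Function.uncurry_def]
    by_cases hs : s ∈ Set.Icc (-1 : ℝ) 1
    · have : x + (r * s) • v ∉ tsupport (dirSecond d φ v) := by
        intro h
        refine hx ⟨⟨(x + (r * s) • v, s), ⟨h, hs⟩, by simp⟩, hs⟩
      rw [image_eq_zero_of_notMem_tsupport this]; simp
    · rw [tent_eq_zero hs]; simp

lemma tendsto_integral_Dlt {d : ℕ} {f φ : EuclideanSpace ℝ (Fin d) → ℝ} (hf : Continuous f)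
    (hφ : ContDiff ℝ (⊤ : ℕ∞) φ) (hc : HasCompactSupport φ) (v : EuclideanSpace ℝ (Fin d))
    (r : ℕ → ℝ) (hr : Tendsto r atTop (𝓝[>] 0)) :
    Tendsto (fun n => ∫ x, φ x * Dlt f v (r n) x) atTop
      (𝓝 (∫ x, f x * dirSecond d φ v x)) := by
  have hG := continuous_Gfun hf hφ hc v
  have hcont : Continuous (fun R : ℝ => ∫ s, tent s * Gfun d f φ v (R * s)) := by
    rw [← continuousOn_univ]
    have htc := continuous_tent
    refine continuousOn_integral_of_compact_support (isCompact_Icc (a := (-1 : ℝ)) (b := 1)) ?_ ?_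
    · exact Continuous.continuousOn (by simp only [Function.uncurry_def]; fun_prop)
    · intro R s _ hs
      rw [tent_eq_zero hs, zero_mul]
  have h0 : ∫ s, tent s * Gfun d f φ v (0 * s) = ∫ x, f x * dirSecond d φ v x := by
    simp only [zero_mul]
    rw [integral_mul_const, integral_tent, one_mul]
    simp [Gfun]
  rw [← h0]
  refine ((hcont.tendsto 0).comp (hr.mono_right nhdsWithin_le_nhds)).congr' ?_
  filter_upwards [hr.eventually self_mem_nhdsWithin] with n hn
  have : 0 < r n := hn
  exact (integral_Dlt hf hφ hc v (r n) this.ne').symm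

lemma rep_sum {d : ℕ} {ι : Type*} (S : Finset ι) (c : ι → ℝ)
    (mp mn : ι → Measure (EuclideanSpace ℝ (Fin d)))
    (hp : ∀ i, IsLocallyFiniteMeasure (mp i)) (hn : ∀ i, IsLocallyFiniteMeasure (mn i)) :
    ∃ α β : Measure (EuclideanSpace ℝ (Fin d)), IsLocallyFiniteMeasure α ∧
      IsLocallyFiniteMeasure β ∧
      (∀ φ : EuclideanSpace ℝ (Fin d) → ℝ, Continuous φ → HasCompactSupport φ →
        ∫ x, φ x ∂α - ∫ x, φ x ∂β = ∑ i ∈ S, c i * (∫ x, φ x ∂(mp i) - ∫ x, φ x ∂(mn i))) ∧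
      ∀ᵐ x ∂(volume : Measure (EuclideanSpace ℝ (Fin d))),
        (α.rnDeriv volume x).toReal - (β.rnDeriv volume x).toReal =
          ∑ i ∈ S, c i * (((mp i).rnDeriv volume x).toReal - ((mn i).rnDeriv volume x).toReal) := by
  classical
  induction S using Finset.induction_on with
  | empty =>
    refine ⟨0, 0, inferInstance, inferInstance, by simp, ?_⟩
    simp
  | insert i S hi ih =>
    obtain ⟨α, β, hα, hβ, h1, h2⟩ := ih
    obtain ⟨k, P, M, hP, hM, e1, e2⟩ : ∃ (k : ℝ≥0) (P M : Measure (EuclideanSpace ℝ (Fin d))),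
        IsLocallyFiniteMeasure P ∧ IsLocallyFiniteMeasure M ∧
        (∀ φ : EuclideanSpace ℝ (Fin d) → ℝ, c i * (∫ x, φ x ∂(mp i) - ∫ x, φ x ∂(mn i)) =
          k * (∫ x, φ x ∂P - ∫ x, φ x ∂M)) ∧
        ∀ x, c i * (((mp i).rnDeriv volume x).toReal - ((mn i).rnDeriv volume x).toReal) =
          k * ((P.rnDeriv volume x).toReal - (M.rnDeriv volume x).toReal) := by
      rcases le_total 0 (c i) with h0 | h0
      · refine ⟨(c i).toNNReal, mp i, mn i, hp i, hn i, fun φ => ?_, fun x => ?_⟩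
        · rw [Real.coe_toNNReal _ h0]
        · rw [Real.coe_toNNReal _ h0]
      · have h0' : 0 ≤ -c i := by linarith
        refine ⟨(-c i).toNNReal, mn i, mp i, hn i, hp i, fun φ => ?_, fun x => ?_⟩
        · rw [Real.coe_toNNReal _ h0']; ring
        · rw [Real.coe_toNNReal _ h0']; ring
    have ladd : ∀ (a b : Measure (EuclideanSpace ℝ (Fin d))), IsLocallyFiniteMeasure a →
        IsLocallyFiniteMeasure b → IsLocallyFiniteMeasure (a + k • b) := by
      intro a b ha hb
      refine ⟨fun x => ?_⟩
      refine ⟨closedBall x 1, closedBall_mem_nhds x one_pos, ?_⟩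
      have h1 := (isCompact_closedBall x (1:ℝ)).measure_lt_top (μ := a)
      have h2 := (isCompact_closedBall x (1:ℝ)).measure_lt_top (μ := b)
      rw [Measure.add_apply, Measure.smul_apply]
      exact ENNReal.add_lt_top.2 ⟨h1, ENNReal.mul_lt_top ENNReal.coe_lt_top h2⟩
    have rn : ∀ (a b : Measure (EuclideanSpace ℝ (Fin d))), IsLocallyFiniteMeasure a →
        IsLocallyFiniteMeasure b → ∀ᵐ x ∂(volume : Measure (EuclideanSpace ℝ (Fin d))),
          ((a + k • b).rnDeriv volume x).toReal =
            (a.rnDeriv volume x).toReal + k * (b.rnDeriv volume x).toReal := by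
      intro a b ha hb
      filter_upwards [Measure.rnDeriv_add' a (k • b) volume,
        Measure.rnDeriv_smul_left' b volume k, Measure.rnDeriv_ne_top a volume,
        Measure.rnDeriv_ne_top b volume] with x hx1 hx2 hx3 hx4
      rw [hx1, Pi.add_apply, hx2, Pi.smul_apply, ENNReal.toReal_add hx3]
      · simp [ENNReal.smul_def]
      · exact ENNReal.mul_ne_top ENNReal.coe_ne_top hx4
    refine ⟨α + k • P, β + k • M, ladd _ _ hα hP, ladd _ _ hβ hM, ?_, ?_⟩
    · intro φ hφ hc
      have int : ∀ (a : Measure (EuclideanSpace ℝ (Fin d))), IsLocallyFiniteMeasure a →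
          Integrable φ a := fun a ha => hφ.integrable_of_hasCompactSupport hc
      rw [integral_add_measure (int _ hα) ((int _ hP).smul_measure_nnreal),
        integral_add_measure (int _ hβ) ((int _ hM).smul_measure_nnreal),
        integral_smul_nnreal_measure, integral_smul_nnreal_measure, Finset.sum_insert hi, e1,
        ← h1 φ hφ hc]
      simp only [NNReal.smul_def, smul_eq_mul]
      ring
    · filter_upwards [h2, rn α P hα hP, rn β M hβ hM] with x hx hx1 hx2
      rw [Finset.sum_insert hi, e2, ← hx, hx1, hx2]
      ring

lemma rep_dir {d : ℕ} {f : EuclideanSpace ℝ (Fin d) → ℝ} (hf : Continuous f)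
    (μp μn : Fin d → Fin d → Measure (EuclideanSpace ℝ (Fin d)))
    (hμ : IsSecondDerivMeasures d f μp μn) (v : EuclideanSpace ℝ (Fin d)) :
    ∃ α β : Measure (EuclideanSpace ℝ (Fin d)), IsLocallyFiniteMeasure α ∧
      IsLocallyFiniteMeasure β ∧
      (∀ φ : EuclideanSpace ℝ (Fin d) → ℝ, ContDiff ℝ (⊤ : ℕ∞) φ → HasCompactSupport φ →
        ∫ x, φ x ∂α - ∫ x, φ x ∂β = ∫ x, f x * dirSecond d φ v x) ∧
      ∀ᵐ x ∂(volume : Measure (EuclideanSpace ℝ (Fin d))),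
        (α.rnDeriv volume x).toReal - (β.rnDeriv volume x).toReal =
          quadForm d (densityMatrix d μp μn x) v := by
  obtain ⟨h1, h2, h3⟩ := hμ
  obtain ⟨α, β, hα, hβ, ha, hb⟩ := rep_sum (d := d) (Finset.univ : Finset (Fin d × Fin d))
    (fun q => v q.1 * v q.2) (fun q => μp q.1 q.2) (fun q => μn q.1 q.2)
    (fun q => h1 q.1 q.2) (fun q => h2 q.1 q.2)
  refine ⟨α, β, hα, hβ, ?_, ?_⟩
  · intro φ hφ hc
    rw [ha φ hφ.continuous hc]
    have hint : ∀ i j, Integrable (fun x => f x * (v i * v j * secondPartial d φ i j x)) := by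
      intro i j
      have hcs : HasCompactSupport (secondPartial d φ i j) :=
        (hc.fderiv_apply (𝕜 := ℝ) _).fderiv_apply (𝕜 := ℝ) _
      have hcc : Continuous (secondPartial d φ i j) :=
        (contDiff_fderiv_apply (contDiff_fderiv_apply hφ _) _).continuous
      exact Continuous.integrable_of_hasCompactSupport (by fun_prop) hcs.mul_left.mul_left
    simp only [dirSecond, Finset.mul_sum]
    rw [integral_finsetSum _ (fun i _ => integrable_finsetSum _ fun j _ => hint i j),
      Fintype.sum_prod_type]
    refine Finset.sum_congr rfl fun i _ => ?_
    rw [integral_finsetSum _ (fun j _ => hint i j)]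
    refine Finset.sum_congr rfl fun j _ => ?_
    rw [h3 i j φ hφ hc, ← integral_const_mul]
    congr 1; funext x; ring
  · filter_upwards [hb] with x hx
    rw [hx, Fintype.sum_prod_type]
    unfold quadForm densityMatrix
    refine Finset.sum_congr rfl fun i _ => Finset.sum_congr rfl fun j _ => ?_
    simp only [Matrix.of_apply]; ring

lemma Dlt_nonneg {d : ℕ} {f : EuclideanSpace ℝ (Fin d) → ℝ} (hf : ConvexOn ℝ Set.univ f)
    (v : EuclideanSpace ℝ (Fin d)) (r : ℝ) (x : EuclideanSpace ℝ (Fin d)) : 0 ≤ Dlt f v r x := by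
  have := hf.2 (Set.mem_univ (x + r • v)) (Set.mem_univ (x - r • v))
    (by norm_num : (0:ℝ) ≤ 1 / 2) (by norm_num : (0:ℝ) ≤ 1 / 2) (by norm_num)
  have e : (1 / 2 : ℝ) • (x + r • v) + (1 / 2 : ℝ) • (x - r • v) = x := by module
  rw [e] at this
  simp only [smul_eq_mul] at this
  unfold Dlt
  refine div_nonneg (by linarith) (by positivity)

lemma continuous_Dlt {d : ℕ} {f : EuclideanSpace ℝ (Fin d) → ℝ} (hf : Continuous f)
    (v : EuclideanSpace ℝ (Fin d)) (r : ℝ) : Continuous (Dlt f v r) := by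
  unfold Dlt; fun_prop

lemma lintegral_Dlt {d : ℕ} {f φ : EuclideanSpace ℝ (Fin d) → ℝ} (hf : ConvexOn ℝ Set.univ f)
    (hφ : ContDiff ℝ (⊤ : ℕ∞) φ) (hc : HasCompactSupport φ) (h0 : ∀ x, 0 ≤ φ x)
    (v : EuclideanSpace ℝ (Fin d)) (r : ℝ) :
    ∫⁻ x, ENNReal.ofReal (φ x) * ENNReal.ofReal (Dlt f v r x) =
      ENNReal.ofReal (∫ x, φ x * Dlt f v r x) := by
  have hcont := continuous_Dlt hf.locallyLipschitz.continuous v r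
  rw [ofReal_integral_eq_lintegral_ofReal]
  · simp only [ENNReal.ofReal_mul (h0 _)]
  · exact (hφ.continuous.mul hcont).integrable_of_hasCompactSupport hc.mul_right
  · exact Eventually.of_forall fun x => mul_nonneg (h0 x) (Dlt_nonneg hf v r x)

lemma dirSecond_integral_nonneg {d : ℕ} {f φ : EuclideanSpace ℝ (Fin d) → ℝ}
    (hf : ConvexOn ℝ Set.univ f)
    (hφ : ContDiff ℝ (⊤ : ℕ∞) φ) (hc : HasCompactSupport φ) (h0 : ∀ x, 0 ≤ φ x)
    (v : EuclideanSpace ℝ (Fin d)) (r : ℕ → ℝ) (hr : Tendsto r atTop (𝓝[>] 0)) :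
    0 ≤ ∫ x, f x * dirSecond d φ v x :=
  ge_of_tendsto' (tendsto_integral_Dlt hf.locallyLipschitz.continuous hφ hc v r hr) fun n =>
    integral_nonneg fun x => mul_nonneg (h0 x) (Dlt_nonneg hf v (r n) x)

lemma upper_bound {d : ℕ} {f : EuclideanSpace ℝ (Fin d) → ℝ} (hf : ConvexOn ℝ Set.univ f)
    (v : EuclideanSpace ℝ (Fin d)) (r : ℕ → ℝ) (hr : Tendsto r atTop (𝓝[>] 0))
    (α β : Measure (EuclideanSpace ℝ (Fin d))) [IsLocallyFiniteMeasure α]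
    [IsLocallyFiniteMeasure β]
    (hrep : ∀ φ : EuclideanSpace ℝ (Fin d) → ℝ, ContDiff ℝ (⊤ : ℕ∞) φ → HasCompactSupport φ →
        ∫ x, φ x ∂α - ∫ x, φ x ∂β = ∫ x, f x * dirSecond d φ v x) :
    (volume : Measure (EuclideanSpace ℝ (Fin d))).withDensity
      (fun x => liminf (fun n => ENNReal.ofReal (Dlt f v (r n) x)) atTop) + β ≤ α := by
  have hcont := hf.locallyLipschitz.continuous
  have hmn : ∀ n, Measurable (fun x => ENNReal.ofReal (Dlt f v (r n) x)) := fun n =>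
    (continuous_Dlt hcont v (r n)).measurable.ennreal_ofReal
  refine measure_le_of_test _ _ fun φ hφ hc h0 => ?_
  have hφm : Measurable (fun x => ENNReal.ofReal (φ x)) := hφ.continuous.measurable.ennreal_ofReal
  have hlm : Measurable (fun x => liminf (fun n => ENNReal.ofReal (Dlt f v (r n) x)) atTop) :=
    Measurable.liminf hmn
  set T := ∫ x, f x * dirSecond d φ v x with hT
  have hT0 : 0 ≤ T := dirSecond_integral_nonneg hf hφ hc h0 v r hr
  have e1 : ∫⁻ x, liminf (fun n => ENNReal.ofReal (Dlt f v (r n) x)) atTop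
      ∂(volume.withDensity fun x => ENNReal.ofReal (φ x)) ≤ ENNReal.ofReal T := by
    refine (lintegral_liminf_le hmn).trans (le_of_eq ?_)
    have : ∀ n, ∫⁻ x, ENNReal.ofReal (Dlt f v (r n) x)
        ∂(volume.withDensity fun x => ENNReal.ofReal (φ x)) =
        ENNReal.ofReal (∫ x, φ x * Dlt f v (r n) x) := by
      intro n
      rw [lintegral_withDensity_eq_lintegral_mul _ hφm (hmn n), ← lintegral_Dlt hf hφ hc h0]
      rfl
    simp only [this]
    exact (ENNReal.tendsto_ofReal (tendsto_integral_Dlt hcont hφ hc v r hr)).liminf_eq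
  rw [lintegral_withDensity_eq_lintegral_mul _ hφm hlm] at e1
  rw [lintegral_add_measure, lintegral_withDensity_eq_lintegral_mul _ hlm hφm]
  have iα : Integrable φ α := hφ.continuous.integrable_of_hasCompactSupport hc
  have iβ : Integrable φ β := hφ.continuous.integrable_of_hasCompactSupport hc
  rw [← ofReal_integral_eq_lintegral_ofReal iα (Eventually.of_forall h0),
    ← ofReal_integral_eq_lintegral_ofReal iβ (Eventually.of_forall h0)]
  have e2 : ∫ x, φ x ∂α = T + ∫ x, φ x ∂β := by rw [hT, ← hrep φ hφ hc]; ring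
  rw [e2, ENNReal.ofReal_add hT0 (integral_nonneg h0)]
  gcongr
  rw [mul_comm]
  exact e1

lemma lower_test {d : ℕ} {f φ : EuclideanSpace ℝ (Fin d) → ℝ} 
    (v : EuclideanSpace ℝ (Fin d)) 
    (α β : Measure (EuclideanSpace ℝ (Fin d))) [IsLocallyFiniteMeasure α]
    [IsLocallyFiniteMeasure β]
    (hrep : ∀ φ : EuclideanSpace ℝ (Fin d) → ℝ, ContDiff ℝ (⊤ : ℕ∞) φ → HasCompactSupport φ →
        ∫ x, φ x ∂α - ∫ x, φ x ∂β = ∫ x, f x * dirSecond d φ v x)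
    (q : EuclideanSpace ℝ (Fin d) → ℝ≥0∞) (hqm : Measurable q)
    (hq : volume.withDensity q + β ≤ α) 
    (hφ : ContDiff ℝ (⊤ : ℕ∞) φ) (hc : HasCompactSupport φ) (h0 : ∀ x, 0 ≤ φ x) :
    ∫⁻ x, ENNReal.ofReal (φ x) * q x ≤ ENNReal.ofReal (∫ x, f x * dirSecond d φ v x) := by
  have hφm : Measurable (fun x => ENNReal.ofReal (φ x)) := hφ.continuous.measurable.ennreal_ofReal
  have h := lintegral_mono' hq (le_refl (fun x => ENNReal.ofReal (φ x)))
  rw [lintegral_add_measure, lintegral_withDensity_eq_lintegral_mul _ hqm hφm] at h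
  have iα : Integrable φ α := hφ.continuous.integrable_of_hasCompactSupport hc
  have iβ : Integrable φ β := hφ.continuous.integrable_of_hasCompactSupport hc
  rw [← ofReal_integral_eq_lintegral_ofReal iα (Eventually.of_forall h0),
    ← ofReal_integral_eq_lintegral_ofReal iβ (Eventually.of_forall h0)] at h
  rw [← hrep φ hφ hc, ENNReal.ofReal_sub _ (integral_nonneg h0)]
  refine ENNReal.le_sub_of_add_le_right ENNReal.ofReal_ne_top ?_
  refine le_trans (le_of_eq ?_) h
  congr 1
  refine lintegral_congr fun x => ?_
  rw [Pi.mul_apply, mul_comm]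

lemma lower_kernel {d : ℕ} {f : EuclideanSpace ℝ (Fin d) → ℝ} (hf : ConvexOn ℝ Set.univ f)
    (v : EuclideanSpace ℝ (Fin d)) (r : ℕ → ℝ) (hr : Tendsto r atTop (𝓝[>] 0))
    (α β : Measure (EuclideanSpace ℝ (Fin d))) [IsLocallyFiniteMeasure α]
    [IsLocallyFiniteMeasure β]
    (hrep : ∀ φ : EuclideanSpace ℝ (Fin d) → ℝ, ContDiff ℝ (⊤ : ℕ∞) φ → HasCompactSupport φ →
        ∫ x, φ x ∂α - ∫ x, φ x ∂β = ∫ x, f x * dirSecond d φ v x)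
    (q : EuclideanSpace ℝ (Fin d) → ℝ≥0∞) (hqm : Measurable q)
    (hq : volume.withDensity q + β ≤ α) (R : ℝ) (hR : R ≠ 0) :
    ∀ᵐ x ∂(volume : Measure (EuclideanSpace ℝ (Fin d))),
      ∫⁻ s, ENNReal.ofReal (tent s) * q (x - (R * s) • v) ≤ ENNReal.ofReal (Dlt f v R x) := by
  have hcont := hf.locallyLipschitz.continuous
  have hDc := continuous_Dlt hcont v R
  have htm : Measurable (fun s => ENNReal.ofReal (tent s)) :=
    continuous_tent.measurable.ennreal_ofReal
  have hjm : Measurable (fun p : EuclideanSpace ℝ (Fin d) × ℝ =>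
      ENNReal.ofReal (tent p.2) * q (p.1 - (R * p.2) • v)) := by
    refine (htm.comp measurable_snd).mul (hqm.comp ?_)
    exact Continuous.measurable (by fun_prop)
  have hKm : Measurable (fun x => ∫⁻ s, ENNReal.ofReal (tent s) * q (x - (R * s) • v)) :=
    hjm.lintegral_prod_right'
  have hDm : Measurable (fun x => ENNReal.ofReal (Dlt f v R x)) := hDc.measurable.ennreal_ofReal
  haveI : IsLocallyFiniteMeasure ((volume : Measure (EuclideanSpace ℝ (Fin d))).withDensity
      (fun x => ENNReal.ofReal (Dlt f v R x))) :=
    IsLocallyFiniteMeasure.withDensity_ofReal hDc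
  have hle : (volume : Measure (EuclideanSpace ℝ (Fin d))).withDensity
      (fun x => ∫⁻ s, ENNReal.ofReal (tent s) * q (x - (R * s) • v)) ≤
      (volume : Measure (EuclideanSpace ℝ (Fin d))).withDensity
      (fun x => ENNReal.ofReal (Dlt f v R x)) := by
    refine measure_le_of_test _ _ fun φ hφ hc h0 => ?_
    have hφm : Measurable (fun x => ENNReal.ofReal (φ x)) :=
      hφ.continuous.measurable.ennreal_ofReal
    have hG := continuous_Gfun hcont hφ hc v
    have htr : ∀ τ : ℝ, ∫⁻ x, ENNReal.ofReal (φ (x + τ • v)) * q x ≤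
        ENNReal.ofReal (Gfun d f φ v τ) ∧ 0 ≤ Gfun d f φ v τ := by
      intro τ
      have hφ' : ContDiff ℝ (⊤ : ℕ∞) (fun x => φ (x + τ • v)) :=
        hφ.comp (contDiff_id.add contDiff_const)
      have hc' : HasCompactSupport (fun x => φ (x + τ • v)) :=
        hc.comp_homeomorph (Homeomorph.addRight (τ • v))
      have a := lower_test v α β hrep q hqm hq hφ' hc' (fun x => h0 _)
      have b := dirSecond_integral_nonneg hf hφ' hc' (fun x => h0 _) v r hr
      simp only [dirSecond_translate] at a b
      exact ⟨a, b⟩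
    rw [lintegral_withDensity_eq_lintegral_mul _ hKm hφm,
      lintegral_withDensity_eq_lintegral_mul _ hDm hφm]
    calc ∫⁻ x, ((fun x => ∫⁻ s, ENNReal.ofReal (tent s) * q (x - (R * s) • v)) *
            fun x => ENNReal.ofReal (φ x)) x
        = ∫⁻ x, ∫⁻ s, ENNReal.ofReal (φ x) * (ENNReal.ofReal (tent s) * q (x - (R * s) • v)) := by
          refine lintegral_congr fun x => ?_
          have hm1 : Measurable (fun s => ENNReal.ofReal (tent s) * q (x - (R * s) • v)) :=
            hjm.comp measurable_prodMk_left
          rw [lintegral_const_mul _ hm1, Pi.mul_apply, mul_comm]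
      _ = ∫⁻ s, ∫⁻ x, ENNReal.ofReal (φ x) * (ENNReal.ofReal (tent s) * q (x - (R * s) • v)) := by
          refine lintegral_lintegral_swap (Measurable.aemeasurable ?_)
          exact (hφm.comp measurable_fst).mul hjm
      _ = ∫⁻ s, ENNReal.ofReal (tent s) * ∫⁻ x, ENNReal.ofReal (φ (x + (R * s) • v)) * q x := by
          refine lintegral_congr fun s => ?_
          rw [← lintegral_const_mul]
          · rw [← lintegral_add_right_eq_self (fun x => ENNReal.ofReal (φ x) *
              (ENNReal.ofReal (tent s) * q (x - (R * s) • v))) ((R * s) • v)]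
            refine lintegral_congr fun x => ?_
            rw [add_sub_cancel_right]; ring
          · exact (hφm.comp (by fun_prop :
              Measurable fun x : EuclideanSpace ℝ (Fin d) => x + (R * s) • v)).mul hqm
      _ ≤ ∫⁻ s, ENNReal.ofReal (tent s) * ENNReal.ofReal (Gfun d f φ v (R * s)) := by
          refine lintegral_mono fun s => ?_
          gcongr
          exact (htr (R * s)).1
      _ = ENNReal.ofReal (∫ s, tent s * Gfun d f φ v (R * s)) := by
          rw [ofReal_integral_eq_lintegral_ofReal]
          · simp only [ENNReal.ofReal_mul (tent_nonneg _)]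
          · exact (continuous_tent.mul (by fun_prop)).integrable_of_hasCompactSupport
              hasCompactSupport_tent.mul_right
          · exact Eventually.of_forall fun s => mul_nonneg (tent_nonneg s) (htr _).2
      _ = ∫⁻ x, ((fun x => ENNReal.ofReal (Dlt f v R x)) * fun x => ENNReal.ofReal (φ x)) x := by
          rw [← integral_Dlt hcont hφ hc v R hR, ← lintegral_Dlt hf hφ hc h0]
          refine lintegral_congr fun x => ?_
          rw [Pi.mul_apply, mul_comm]
  refine ae_le_of_forall_setLIntegral_le_of_sigmaFinite hKm fun s hs _ => ?_
  rw [← withDensity_apply _ hs, ← withDensity_apply _ hs]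
  exact hle s

lemma kernel_tendsto {d : ℕ} (v : EuclideanSpace ℝ (Fin d)) (r : ℕ → ℝ)
    (hr : Tendsto r atTop (𝓝[>] 0)) (h : EuclideanSpace ℝ (Fin d) → ℝ) (hm : Measurable h)
    (N : ℝ) (hb : ∀ x, |h x| ≤ N) :
    ∀ᵐ x ∂(volume : Measure (EuclideanSpace ℝ (Fin d))),
      Tendsto (fun n => ∫ s, tent s * h (x - (r n * s) • v)) atTop (𝓝 (h x)) := by
  refine ae_of_ae_line v (s := {x | Tendsto (fun n => ∫ s, tent s * h (x - (r n * s) • v))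
    atTop (𝓝 (h x))}) ?_ ?_
  · refine measurableSet_tendsto_fun (f := fun n x => ∫ s, tent s * h (x - (r n * s) • v))
      (fun n => ?_) hm
    have : StronglyMeasurable (Function.uncurry
        fun (x : EuclideanSpace ℝ (Fin d)) (s : ℝ) => tent s * h (x - (r n * s) • v)) := by
      refine Measurable.stronglyMeasurable ?_
      refine (continuous_tent.measurable.comp measurable_snd).mul (hm.comp ?_)
      exact Continuous.measurable (by fun_prop)
    exact this.integral_prod_right.measurable
  · intro y
    have := tent_lebesgue (fun t => h (y + t • v))
      (hm.comp (Continuous.measurable (by fun_prop))) N (fun t => hb _) r hr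
    filter_upwards [this] with t ht
    refine ht.congr fun n => ?_
    congr 1; funext s
    rw [sub_smul, add_sub_assoc]

lemma lower_bound {d : ℕ} {f : EuclideanSpace ℝ (Fin d) → ℝ} (hf : ConvexOn ℝ Set.univ f)
    (v : EuclideanSpace ℝ (Fin d)) (r : ℕ → ℝ) (hr : Tendsto r atTop (𝓝[>] 0))
    (α β : Measure (EuclideanSpace ℝ (Fin d))) [IsLocallyFiniteMeasure α]
    [IsLocallyFiniteMeasure β]
    (hrep : ∀ φ : EuclideanSpace ℝ (Fin d) → ℝ, ContDiff ℝ (⊤ : ℕ∞) φ → HasCompactSupport φ →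
        ∫ x, φ x ∂α - ∫ x, φ x ∂β = ∫ x, f x * dirSecond d φ v x)
    (q : EuclideanSpace ℝ (Fin d) → ℝ≥0∞) (hqm : Measurable q)
    (hq : volume.withDensity q + β ≤ α) :
    ∀ᵐ x ∂(volume : Measure (EuclideanSpace ℝ (Fin d))), ∀ c : ℝ,
      Tendsto (fun n => Dlt f v (r n) x) atTop (𝓝 c) → q x ≠ ⊤ → q x ≤ ENNReal.ofReal c := by
  set h : ℕ → EuclideanSpace ℝ (Fin d) → ℝ := fun N x => (min (q x) N).toReal with hh
  have hhm : ∀ N, Measurable (h N) := fun N => (hqm.min measurable_const).ennreal_toReal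
  have hfin : ∀ (N : ℕ) x, min (q x) (N : ℝ≥0∞) ≠ ⊤ := fun N x =>
    ne_top_of_le_ne_top (ENNReal.natCast_ne_top N) (min_le_right _ _)
  have hhb : ∀ (N : ℕ) x, |h N x| ≤ N := by
    intro N x
    rw [abs_of_nonneg ENNReal.toReal_nonneg]
    have := ENNReal.toReal_mono (ENNReal.natCast_ne_top N) (min_le_right (q x) (N : ℝ≥0∞))
    simpa using this
  have hhq : ∀ (N : ℕ) x, ENNReal.ofReal (h N x) ≤ q x := by
    intro N x
    simp only [hh]
    rw [ENNReal.ofReal_toReal (hfin N x)]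
    exact min_le_left _ _
  have A : ∀ᵐ x ∂(volume : Measure (EuclideanSpace ℝ (Fin d))), ∀ n : ℕ, 0 < r n →
      ∫⁻ s, ENNReal.ofReal (tent s) * q (x - (r n * s) • v) ≤
        ENNReal.ofReal (Dlt f v (r n) x) := by
    rw [ae_all_iff]
    intro n
    by_cases hn : 0 < r n
    · filter_upwards [lower_kernel hf v r hr α β hrep q hqm hq (r n) hn.ne'] with x hx _ using hx
    · exact Eventually.of_forall fun x h => absurd h hn
  have B : ∀ᵐ x ∂(volume : Measure (EuclideanSpace ℝ (Fin d))), ∀ N : ℕ,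
      Tendsto (fun n => ∫ s, tent s * h N (x - (r n * s) • v)) atTop (𝓝 (h N x)) := by
    rw [ae_all_iff]
    exact fun N => kernel_tendsto v r hr (h N) (hhm N) N (hhb N)
  filter_upwards [A, B] with x hA hB c hc hqx
  obtain ⟨N, hN⟩ := ENNReal.exists_nat_gt hqx
  have hqN : ENNReal.ofReal (h N x) = q x := by
    simp only [hh]
    rw [ENNReal.ofReal_toReal (hfin N x), min_eq_left hN.le]
  rw [← hqN]
  refine le_of_tendsto_of_tendsto (ENNReal.tendsto_ofReal (hB N)) (ENNReal.tendsto_ofReal hc) ?_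
  filter_upwards [hr.eventually self_mem_nhdsWithin] with n hn
  refine le_trans ?_ (hA n hn)
  rw [ofReal_integral_eq_lintegral_ofReal]
  · refine lintegral_mono fun s => ?_
    simp only
    rw [ENNReal.ofReal_mul (tent_nonneg s)]
    gcongr
    exact hhq N _
  · refine (continuous_tent.integrable_of_hasCompactSupport hasCompactSupport_tent).mul_bdd
      (c := N) ?_ ?_
    · exact ((hhm N).comp (Continuous.measurable (by fun_prop))).aestronglyMeasurable
    · exact Eventually.of_forall fun s => hhb _ _
  · exact Eventually.of_forall fun s => mul_nonneg (tent_nonneg s) ENNReal.toReal_nonneg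

theorem second_directional_derivative_ae (d : ℕ)
    (f : EuclideanSpace ℝ (Fin d) → ℝ) (hf : ConvexOn ℝ Set.univ f)
    (A B : ℝ) (hgrowth : ∀ y, |f y| ≤ A * ‖y‖ + B)
    (p : EuclideanSpace ℝ (Fin d) → EuclideanSpace ℝ (Fin d))
    (hp : ∀ x y, f x + ⟪p x, y - x⟫ ≤ f y)
    (μp μn : Fin d → Fin d → Measure (EuclideanSpace ℝ (Fin d)))
    (hμ : IsSecondDerivMeasures d f μp μn)
    (v : EuclideanSpace ℝ (Fin d)) (hv : ‖v‖ = 1) :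
    ∀ᵐ x ∂(volume : Measure (EuclideanSpace ℝ (Fin d))),
      Filter.Tendsto
        (fun r : ℝ => (1 / r ^ 2) *
          |f (x + r • v) - f x - r * ⟪p x, v⟫ -
            (r ^ 2 / 2) * quadForm d (densityMatrix d μp μn x) v|)
        (nhdsWithin 0 {(0 : ℝ)}ᶜ) (nhds 0) := by
  have hcont := hf.locallyLipschitz.continuous
  obtain ⟨α, β, hα, hβ, hrep, hquad⟩ := rep_dir hcont μp μn hμ v
  obtain ⟨r, hr⟩ : ∃ r : ℕ → ℝ, Tendsto r atTop (𝓝[>] 0) :=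
    ⟨fun n : ℕ => 1 / ((n : ℝ) + 1), tendsto_nhdsWithin_iff.2
      ⟨tendsto_one_div_add_atTop_nhds_zero_nat, Eventually.of_forall fun n => by
        show (0 : ℝ) < 1 / ((n : ℝ) + 1)
        positivity⟩⟩
  have hup := upper_bound hf v r hr α β hrep
  have hlm : Measurable (fun x => liminf (fun n => ENNReal.ofReal (Dlt f v (r n) x)) atTop) :=
    Measurable.liminf fun n => (continuous_Dlt hcont v (r n)).measurable.ennreal_ofReal
  have hrn := rn_le_of_le _ α β _ hlm hup
  have hle : β ≤ α := le_trans (Measure.le_add_left le_rfl) hup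
  have hq := add_withDensity_sub_le (volume : Measure (EuclideanSpace ℝ (Fin d))) α β hle
  have hlow := lower_bound hf v r hr α β hrep _
    ((Measure.measurable_rnDeriv _ _).sub (Measure.measurable_rnDeriv _ _)) hq
  filter_upwards [hquad, hrn, hlow, ae_second_order f hf v, Measure.rnDeriv_ne_top α volume,
    Measure.rnDeriv_ne_top β volume] with x hx1 hx2 hx3 hx4 hx5 hx6
  obtain ⟨hdiff, c, hc⟩ := hx4
  have hpv : lineDeriv ℝ f x v = ⟪p x, v⟫ := by
    have h1 : HasDerivAt (fun t : ℝ => f (x + t • v) - t * ⟪p x, v⟫)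
        (lineDeriv ℝ f x v - ⟪p x, v⟫) 0 := by
      have a : HasDerivAt (fun t : ℝ => f (x + t • v)) (lineDeriv ℝ f x v) 0 :=
        hdiff.hasLineDerivAt
      have b : HasDerivAt (fun t : ℝ => t * ⟪p x, v⟫) ⟪p x, v⟫ 0 := by
        simpa using (hasDerivAt_id (0 : ℝ)).mul_const ⟪p x, v⟫
      exact a.fun_sub b
    have h2 : IsLocalMin (fun t : ℝ => f (x + t • v) - t * ⟪p x, v⟫) 0 := by
      refine Eventually.of_forall fun t => ?_
      have := hp x (x + t • v)
      rw [add_sub_cancel_left, inner_smul_right] at this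
      simp only [zero_smul, add_zero, zero_mul, sub_zero]
      linarith
    have := h2.hasDerivAt_eq_zero h1
    linarith
  rw [hpv] at hc
  have hD : Tendsto (fun n => Dlt f v (r n) x) atTop (𝓝 (2 * c)) := by
    have hr' : Tendsto r atTop (𝓝[≠] 0) :=
      hr.mono_right (nhdsWithin_mono _ fun y hy => ne_of_gt hy)
    have hrneg : Tendsto (fun n => -r n) atTop (𝓝[≠] 0) := by
      refine tendsto_nhdsWithin_iff.2 ⟨?_, ?_⟩
      · have := (hr.mono_right nhdsWithin_le_nhds).neg
        simpa using this
      · filter_upwards [hr.eventually self_mem_nhdsWithin] with n hn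
        have : 0 < r n := hn
        simpa using this.ne'
    have := (hc.comp hr').add (hc.comp hrneg)
    rw [← two_mul] at this
    refine this.congr fun n => ?_
    simp only [Function.comp, Dlt, neg_smul, sub_eq_add_neg]
    rw [neg_sq, ← add_div]
    congr 1; ring
  have hc0 : 0 ≤ 2 * c := ge_of_tendsto' hD fun n => Dlt_nonneg hf v (r n) x
  have hlim : liminf (fun n => ENNReal.ofReal (Dlt f v (r n) x)) atTop = ENNReal.ofReal (2 * c) :=
    (ENNReal.tendsto_ofReal hD).liminf_eq
  rw [hlim] at hx2
  have hx7 := hx3 (2 * c) hD (ne_top_of_le_ne_top hx5 tsub_le_self)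
  have hqe : α.rnDeriv volume x - β.rnDeriv volume x = ENNReal.ofReal (2 * c) :=
    le_antisymm hx7 (ENNReal.le_sub_of_add_le_right hx6 hx2)
  have hquadc : quadForm d (densityMatrix d μp μn x) v = 2 * c := by
    rw [← hx1, ← ENNReal.toReal_sub_of_le (le_trans le_add_self hx2) hx5, hqe,
      ENNReal.toReal_ofReal hc0]
  rw [hquadc]
  have hfinal := (hc.sub_const c).abs
  rw [sub_self, abs_zero] at hfinal
  refine hfinal.congr' ?_
  filter_upwards [self_mem_nhdsWithin] with t ht
  have ht0 : t ≠ 0 := ht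
  have ht2 : 0 < t ^ 2 := by positivity
  have e : (f (x + t • v) - f x - t * ⟪p x, v⟫) / t ^ 2 - c =
      (1 / t ^ 2) * (f (x + t • v) - f x - t * ⟪p x, v⟫ - t ^ 2 / 2 * (2 * c)) := by
    field_simp
  rw [e, abs_mul, abs_of_pos (by positivity : 0 < 1 / t ^ 2)]
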